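/- Let $\Sigma^s = \{X \in \mathbb{R}^{d+1} : 0 < X_{d+1} < s\}$ with $s = \min(r, R)$ and $r, R \ge 1/2$. Define, for $A := \max\{1, d \Lambda \lambda^{-1} \|D^2\phi_1\|_{L^\infty}\}$, the function $Q(x, x_{d+1}) := \phi_R(x) + A R^{-1} x_{d+1}(2 - R^{-1} x_{d+1})$. Then $\mathcal{M}^+_{\lambda,\Lambda}(D^2 Q(X)) < 0$ for all $X \in \Sigma^s$; that is, $Q$ is a classical strict supersolution of the Pucci maximal equation in the strip. -/

import Mathlib

open Matrix

/-- The auxiliary function `φ₁(x) = |x|² / (1 + |x|²)`. -/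
noncomputable def phiOne {d : ℕ} (x : EuclideanSpace ℝ (Fin d)) : ℝ :=
  ‖x‖ ^ 2 / (1 + ‖x‖ ^ 2)

/-- Hessian matrix of `φ₁` at `y`, via the second iterated Fréchet derivative. -/
noncomputable def hessPhiOne {d : ℕ} (y : EuclideanSpace ℝ (Fin d)) :
    Matrix (Fin d) (Fin d) ℝ :=
  Matrix.of fun i j =>
    iteratedFDeriv ℝ 2 (phiOne (d := d)) y
      ![EuclideanSpace.single i (1:ℝ), EuclideanSpace.single j (1:ℝ)]

/-- Sup norm of the Hessian of `φ₁`. -/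
noncomputable def hessPhiOneSup (d : ℕ) : ℝ :=
  ⨆ y : EuclideanSpace ℝ (Fin d), ‖iteratedFDeriv ℝ 2 (phiOne (d := d)) y‖

/-- The Pucci maximal operator, variational form, on a general finite index type. -/
noncomputable def pucciSup {m : Type*} [Fintype m] [DecidableEq m]
    (lam Lam : ℝ) (M : Matrix m m ℝ) : ℝ :=
  sSup {t : ℝ | ∃ A : Matrix m m ℝ,
    (A - lam • (1 : Matrix m m ℝ)).PosSemidef ∧
    ((Lam • (1 : Matrix m m ℝ)) - A).PosSemidef ∧ t = (A * M).trace}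

/-- First derivative of `φ₁`. -/
lemma hasFDerivAt_phiOne {d : ℕ} (x : EuclideanSpace ℝ (Fin d)) :
    HasFDerivAt (phiOne (d := d)) ((2 / (1 + ‖x‖ ^ 2) ^ 2) • innerSL ℝ x) x := by
  have h := (hasStrictFDerivAt_norm_sq x).hasFDerivAt
  have hpos : (1 + ‖x‖ ^ 2) ≠ 0 := by positivity
  have hd : HasDerivAt (fun s : ℝ => s / (1 + s)) (1 / (1 + ‖x‖ ^ 2) ^ 2) (‖x‖ ^ 2) := by
    refine ((hasDerivAt_id (‖x‖ ^ 2)).div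
      ((hasDerivAt_id (‖x‖ ^ 2)).const_add 1) hpos).congr_deriv ?_
    simp
  refine (hd.comp_hasFDerivAt x h).congr_fderiv ?_
  ext v
  simp
  ring

/-- The real inner product as a bilinear (rather than sesquilinear) continuous map. -/
noncomputable def realInnerCLM (E : Type*) [NormedAddCommGroup E] [InnerProductSpace ℝ E] :
    E →L[ℝ] E →L[ℝ] ℝ :=
  innerSL ℝ

@[simp]
lemma realInnerCLM_apply {E : Type*} [NormedAddCommGroup E] [InnerProductSpace ℝ E] (x : E) :
    realInnerCLM E x = innerSL ℝ x :=
  rfl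

/-- Second derivative of `φ₁`. -/
lemma hasFDerivAt_fderiv_phiOne {d : ℕ} (x : EuclideanSpace ℝ (Fin d)) :
    HasFDerivAt (fderiv ℝ (phiOne (d := d)))
      ((2 / (1 + ‖x‖ ^ 2) ^ 2) • realInnerCLM (EuclideanSpace ℝ (Fin d)) +
        ((-8 / (1 + ‖x‖ ^ 2) ^ 3) • innerSL ℝ x).smulRight (innerSL ℝ x)) x := by
  have heq : fderiv ℝ (phiOne (d := d)) =
      fun x => (2 / (1 + ‖x‖ ^ 2) ^ 2) • innerSL ℝ x :=
    funext fun x => (hasFDerivAt_phiOne x).fderiv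
  rw [heq]
  have h := (hasStrictFDerivAt_norm_sq x).hasFDerivAt
  have hpos : (1 + ‖x‖ ^ 2) ≠ 0 := by positivity
  have hd : HasDerivAt (fun s : ℝ => 2 / (1 + s) ^ 2) (-4 / (1 + ‖x‖ ^ 2) ^ 3) (‖x‖ ^ 2) := by
    refine ((hasDerivAt_const (‖x‖ ^ 2) (2 : ℝ)).div
      (((hasDerivAt_id (‖x‖ ^ 2)).const_add 1).pow 2) (pow_ne_zero 2 hpos)).congr_deriv ?_
    simp
    field_simp
    ring
  have hg : HasFDerivAt (fun x : EuclideanSpace ℝ (Fin d) => 2 / (1 + ‖x‖ ^ 2) ^ 2)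
      ((-8 / (1 + ‖x‖ ^ 2) ^ 3) • innerSL ℝ x) x := by
    refine (hd.comp_hasFDerivAt x h).congr_fderiv ?_
    ext v
    simp
    ring
  exact hg.smul (realInnerCLM (EuclideanSpace ℝ (Fin d))).hasFDerivAt

lemma norm_iteratedFDeriv_two_phiOne_le {d : ℕ} (x : EuclideanSpace ℝ (Fin d)) :
    ‖iteratedFDeriv ℝ 2 (phiOne (d := d)) x‖ ≤ 10 := by
  refine ContinuousMultilinearMap.opNorm_le_bound (by norm_num) fun m => ?_
  rw [iteratedFDeriv_two_apply, (hasFDerivAt_fderiv_phiOne x).fderiv]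
  have h1 : (1 : ℝ) ≤ 1 + ‖x‖ ^ 2 := by nlinarith [sq_nonneg ‖x‖]
  have a1 : |2 / (1 + ‖x‖ ^ 2) ^ 2| ≤ 2 := by
    rw [abs_of_nonneg (by positivity)]
    exact div_le_self (by norm_num) (one_le_pow₀ h1)
  have a2 : |-8 / (1 + ‖x‖ ^ 2) ^ 3| * ‖x‖ ^ 2 ≤ 8 := by
    rw [abs_div, abs_of_nonneg (by positivity : (0 : ℝ) ≤ (1 + ‖x‖ ^ 2) ^ 3),
      div_mul_eq_mul_div, div_le_iff₀ (by positivity)]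
    norm_num
    nlinarith [le_self_pow₀ h1 (by norm_num : 3 ≠ 0)]
  have i0 := abs_real_inner_le_norm (m 0) (m 1)
  have i1 := abs_real_inner_le_norm x (m 0)
  have i2 := abs_real_inner_le_norm x (m 1)
  rw [Fin.prod_univ_two]
  simp only [_root_.add_apply, _root_.smul_apply,
    ContinuousLinearMap.smulRight_apply, realInnerCLM_apply, innerSL_apply_apply, smul_eq_mul, Real.norm_eq_abs]
  calc _ ≤ |2 / (1 + ‖x‖ ^ 2) ^ 2| * |inner ℝ (m 0) (m 1)| +
        |-8 / (1 + ‖x‖ ^ 2) ^ 3| * |inner ℝ x (m 0)| * |inner ℝ x (m 1)| := by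
        rw [← abs_mul, ← abs_mul, ← abs_mul]
        exact abs_add_le _ _
    _ ≤ 2 * (‖m 0‖ * ‖m 1‖) +
        |-8 / (1 + ‖x‖ ^ 2) ^ 3| * (‖x‖ * ‖m 0‖) * (‖x‖ * ‖m 1‖) := by gcongr
    _ = 2 * (‖m 0‖ * ‖m 1‖) +
        (|-8 / (1 + ‖x‖ ^ 2) ^ 3| * ‖x‖ ^ 2) * (‖m 0‖ * ‖m 1‖) := by ring
    _ ≤ 2 * (‖m 0‖ * ‖m 1‖) + 8 * (‖m 0‖ * ‖m 1‖) := by gcongr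
    _ = 10 * (‖m 0‖ * ‖m 1‖) := by ring

lemma norm_iteratedFDeriv_two_le_hessPhiOneSup {d : ℕ} (x : EuclideanSpace ℝ (Fin d)) :
    ‖iteratedFDeriv ℝ 2 (phiOne (d := d)) x‖ ≤ hessPhiOneSup d :=
  le_ciSup (f := fun y : EuclideanSpace ℝ (Fin d) => ‖iteratedFDeriv ℝ 2 (phiOne (d := d)) y‖)
    ⟨10, Set.forall_mem_range.2 norm_iteratedFDeriv_two_phiOne_le⟩ x

lemma hessPhiOneSup_nonneg (d : ℕ) : 0 ≤ hessPhiOneSup d :=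
  Real.iSup_nonneg fun _ => norm_nonneg _

lemma dotProduct_hessPhiOne_mulVec_le {d : ℕ} (y : EuclideanSpace ℝ (Fin d))
    (v : Fin d → ℝ) :
    v ⬝ᵥ hessPhiOne y *ᵥ v ≤ hessPhiOneSup d * (v ⬝ᵥ v) := by
  set w : EuclideanSpace ℝ (Fin d) := WithLp.toLp 2 v with hw
  have hsum : w = ∑ i, v i • EuclideanSpace.single i (1 : ℝ) := by
    ext j
    simp [hw, Pi.single_apply]
  have hform : v ⬝ᵥ hessPhiOne y *ᵥ v = iteratedFDeriv ℝ 2 (phiOne (d := d)) y ![w, w] := by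
    rw [iteratedFDeriv_two_apply]
    simp only [Matrix.cons_val_zero, Matrix.cons_val_one]
    conv_rhs => rw [hsum]
    simp only [map_sum, map_smul, _root_.sum_apply, _root_.smul_apply,
      dotProduct, mulVec, hessPhiOne, Matrix.of_apply, iteratedFDeriv_two_apply,
      Matrix.cons_val_zero, Matrix.cons_val_one, smul_eq_mul, Finset.mul_sum]
    rw [Finset.sum_comm]
    refine Finset.sum_congr rfl fun i _ => Finset.sum_congr rfl fun j _ => ?_
    ring
  have hnorm : v ⬝ᵥ v = ‖w‖ * ‖w‖ := by
    rw [← real_inner_self_eq_norm_mul_norm, EuclideanSpace.inner_eq_star_dotProduct]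
    simp [hw]
  rw [hform, hnorm]
  refine (le_abs_self _).trans ?_
  have := (iteratedFDeriv ℝ 2 (phiOne (d := d)) y).le_opNorm ![w, w]
  rw [Fin.prod_univ_two] at this
  refine this.trans ?_
  exact mul_le_mul_of_nonneg_right (norm_iteratedFDeriv_two_le_hessPhiOneSup y) (by positivity)

/-- If the quadratic form of `H` is at most `c` times the identity, then
`tr (P H) ≤ c tr P` for `P` positive semidefinite; `H` need not be symmetric. -/
lemma Matrix.PosSemidef.trace_mul_le {n : Type*} [Fintype n] {P H : Matrix n n ℝ}
    (hP : P.PosSemidef) {c : ℝ} (hH : ∀ v, v ⬝ᵥ H *ᵥ v ≤ c * (v ⬝ᵥ v)) :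
    (P * H).trace ≤ c * P.trace := by
  classical
  open scoped MatrixOrder Matrix.Norms.L2Operator in
  obtain ⟨B, rfl⟩ := CStarAlgebra.nonneg_iff_eq_star_mul_self.1 hP.nonneg
  rw [Matrix.star_eq_conjTranspose]
  rw [Matrix.conjTranspose_eq_transpose_of_trivial, Matrix.mul_assoc,
    Matrix.trace_mul_comm, Matrix.trace_mul_comm Bᵀ B]
  simp only [Matrix.trace, Finset.mul_sum]
  refine Finset.sum_le_sum fun i _ => ?_
  have h := hH (B i)
  rw [Matrix.dotProduct_mulVec] at h
  exact h

/-- with `A := max {1, d Λ λ⁻¹ ‖D²φ₁‖_∞}`, the function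
`Q(x, x_{d+1}) = φ_R(x) + A R⁻¹ x_{d+1} (2 - R⁻¹ x_{d+1})` is a classical strict
supersolution of the Pucci maximal equation in the strip `Σ^{min(r,R)}`: its
(block diagonal) Hessian `diag(R⁻² D²φ₁(x/R), -2AR⁻²)` satisfies
`ℳ⁺(D²Q(X)) < 0` for all `X` in the strip. -/
theorem Q_is_strict_supersolution_in_strip
    (d : ℕ) (lam Lam r R : ℝ) (hlam : 0 < lam) (hle : lam ≤ Lam)
    (hr : 1/2 ≤ r) (hR : 1/2 ≤ R) :
    ∀ (x : EuclideanSpace ℝ (Fin d)) (t : ℝ), 0 < t → t < min r R →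
      pucciSup lam Lam
        (Matrix.fromBlocks
          ((R ^ 2)⁻¹ • hessPhiOne (R⁻¹ • x))
          0 0
          (Matrix.of fun (_ _ : Fin 1) =>
            -2 * (max 1 (d * Lam * lam⁻¹ * hessPhiOneSup d)) / R ^ 2))
        < 0 := by
  intro x t _ _
  have hR2 : 0 < R ^ 2 := by positivity
  have hN := hessPhiOneSup_nonneg d
  set N := hessPhiOneSup d
  set K := max 1 (d * Lam * lam⁻¹ * N)
  have hK1 : 1 ≤ K := le_max_left _ _
  have hK2 : d * Lam * N ≤ lam * K := by
    calc d * Lam * N = lam * (d * Lam * lam⁻¹ * N) := by field_simp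
      _ ≤ lam * K := mul_le_mul_of_nonneg_left (le_max_right _ _) hlam.le
  suffices h : pucciSup lam Lam _ ≤ -lam / R ^ 2 from
    h.trans_lt (div_neg_of_neg_of_pos (neg_lt_zero.2 hlam) hR2)
  refine csSup_le ?_ ?_
  · refine ⟨_, lam • 1, ?_, ?_, rfl⟩
    · simpa using Matrix.PosSemidef.zero
    · rw [← sub_smul]
      exact Matrix.PosSemidef.one.smul (sub_nonneg.2 hle)
  · rintro _ ⟨A, hA1, hA2, rfl⟩
    have hA : A.PosSemidef := by
      simpa using hA1.add (Matrix.PosSemidef.one.smul hlam.le)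
    have hP : A.toBlocks₁₁.PosSemidef := hA.submatrix Sum.inl
    have hcorner : lam ≤ A (Sum.inr 0) (Sum.inr 0) := by
      have := hA1.diag_nonneg (i := Sum.inr 0)
      simpa using this
    have htrace : A.toBlocks₁₁.trace ≤ d * Lam := by
      calc A.toBlocks₁₁.trace ≤ ∑ _i : Fin d, Lam := by
            refine Finset.sum_le_sum fun i _ => ?_
            have := hA2.diag_nonneg (i := Sum.inl i)
            simpa [Matrix.toBlocks₁₁] using this
        _ = d * Lam := by simp
    have hH := hP.trace_mul_le (dotProduct_hessPhiOne_mulVec_le (R⁻¹ • x))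
    have hsplit : (A * Matrix.fromBlocks ((R ^ 2)⁻¹ • hessPhiOne (R⁻¹ • x)) 0 0
        (Matrix.of fun (_ _ : Fin 1) => -2 * K / R ^ 2)).trace =
        ((A.toBlocks₁₁ * hessPhiOne (R⁻¹ • x)).trace
          - 2 * K * A (Sum.inr 0) (Sum.inr 0)) / R ^ 2 := by
      conv_lhs => rw [← Matrix.fromBlocks_toBlocks A]
      rw [Matrix.fromBlocks_multiply]
      simp [Matrix.trace, Matrix.mul_apply, Matrix.toBlocks₂₂, ← Finset.mul_sum]
      ring
    rw [hsplit]
    refine div_le_div_of_nonneg_right ?_ hR2.le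
    have h1 : N * A.toBlocks₁₁.trace ≤ N * (d * Lam) := mul_le_mul_of_nonneg_left htrace hN
    have h2 : K * lam ≤ K * A (Sum.inr 0) (Sum.inr 0) :=
      mul_le_mul_of_nonneg_left hcorner (by linarith)
    nlinarith
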